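/- Consider the linear subspace denoising model with 2 ≤ d ≤ n. For every W ∈ ℝ^{n×n}, E‖(W − W*)(x xᵀ + x zᵀ + z xᵀ + z zᵀ)‖_F² ≤ 4 ‖W − W*‖_F² · (2/d + σ_z²/d + σ_z²/n + 2 σ_z⁴/n). -/

import Mathlib

open MeasureTheory ProbabilityTheory Matrix

/-!
With `y = x + z`, the four rank-one terms add up to `y yᵀ`, so for `A = W - W*` and `M = Aᵀ A` the
squared Frobenius norm is the quartic form `(y ⬝ M y) (y ⬝ y)`. Applying the parallelogram
inequality to each factor decouples `c` from `z` at the cost of the factor `4`. For a vector with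
independent centred coordinates the expectation of a quadratic form, alone or multiplied by the
squared norm, is a multiple of `tr M`; for `N(0, v I_m)` the multiples are `v` and `(m + 2) v²`.
Since `U` is an isometry, `tr (Uᵀ M U) ≤ tr M = ‖A‖_F²`. Finally `(m + 2) / m² ≤ 2 / m` for `2 ≤ m`.
-/

section QuadraticForms

lemma sum_vecMulVec_eq_vecMulVec_add {ι : Type*} (x z : ι → ℝ) :
    vecMulVec x x + vecMulVec x z + vecMulVec z x + vecMulVec z z =
      vecMulVec (x + z) (x + z) := by
  rw [add_vecMulVec, vecMulVec_add, vecMulVec_add, ← add_assoc]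

variable {ι κ : Type*} [Fintype ι] [Fintype κ]

lemma sum_sum_sq_eq_trace (A : Matrix κ ι ℝ) : ∑ i, ∑ j, A i j ^ 2 = (Aᵀ * A).trace := by
  simp only [trace, diag_apply, mul_apply, transpose_apply, ← sq]
  exact Finset.sum_comm

lemma dotProduct_transpose_mul_mul_mulVec (U : Matrix ι κ ℝ) (M : Matrix ι ι ℝ) (c : κ → ℝ) :
    c ⬝ᵥ (Uᵀ * M * U) *ᵥ c = (U *ᵥ c) ⬝ᵥ M *ᵥ (U *ᵥ c) := by
  rw [dotProduct_mulVec (U *ᵥ c), vecMul_mulVec, dotProduct_mulVec, dotProduct_mulVec,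
    vecMul_vecMul]

lemma mulVec_dotProduct_mulVec_of_transpose_mul_eq_one [DecidableEq κ] {U : Matrix ι κ ℝ}
    (hU : Uᵀ * U = 1) (c : κ → ℝ) : (U *ᵥ c) ⬝ᵥ (U *ᵥ c) = c ⬝ᵥ c := by
  rw [dotProduct_mulVec, vecMul_mulVec, hU, vecMul_one]

lemma sum_sum_mul_vecMulVec_sq (A : Matrix κ ι ℝ) (y : ι → ℝ) :
    ∑ i, ∑ j, (A * vecMulVec y y) i j ^ 2 = (y ⬝ᵥ (Aᵀ * A) *ᵥ y) * (y ⬝ᵥ y) := by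
  rw [dotProduct_mulVec, ← vecMul_mulVec, ← dotProduct_mulVec]
  simp only [mul_vecMulVec, vecMulVec_apply, mul_pow, ← Finset.sum_mul_sum, dotProduct, ← sq]

lemma dotProduct_mulVec_self_nonneg {M : Matrix ι ι ℝ} (hM : M.PosSemidef) (x : ι → ℝ) :
    0 ≤ x ⬝ᵥ M *ᵥ x := by
  simpa only [star_trivial] using hM.dotProduct_mulVec_nonneg x

lemma dotProduct_mulVec_add_self_le {M : Matrix ι ι ℝ} (hM : M.PosSemidef) (x z : ι → ℝ) :
    (x + z) ⬝ᵥ M *ᵥ (x + z) ≤ 2 * (x ⬝ᵥ M *ᵥ x + z ⬝ᵥ M *ᵥ z) := by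
  have h := dotProduct_mulVec_self_nonneg hM (x - z)
  simp only [mulVec_sub, mulVec_add, dotProduct_sub, dotProduct_add, sub_dotProduct,
    add_dotProduct] at h ⊢
  linarith

lemma dotProduct_add_self_le (x z : ι → ℝ) :
    (x + z) ⬝ᵥ (x + z) ≤ 2 * (x ⬝ᵥ x + z ⬝ᵥ z) := by
  classical
  simpa only [one_mulVec] using dotProduct_mulVec_add_self_le (PosSemidef.one (R := ℝ)) x z

lemma trace_transpose_mul_mul_le [DecidableEq κ] {U : Matrix ι κ ℝ} (hU : Uᵀ * U = 1)
    {M : Matrix ι ι ℝ} (hM : M.PosSemidef) : (Uᵀ * M * U).trace ≤ M.trace := by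
  classical
  set N : Matrix ι ι ℝ := 1 - U * Uᵀ with hN
  have hN_symm : Nᵀ = N := by simp [hN]
  have hN_idem : N * N = N := by
    have hUU : U * Uᵀ * (U * Uᵀ) = U * Uᵀ := by
      rw [Matrix.mul_assoc, ← Matrix.mul_assoc Uᵀ, hU, Matrix.one_mul]
    simp [hN, sub_mul, mul_sub, hUU]
  have h_compl : (Nᴴ * M * N).trace = M.trace - (Uᵀ * M * U).trace := by
    rw [conjTranspose_eq_transpose_of_trivial, hN_symm, trace_mul_cycle, hN_idem, hN, sub_mul,
      Matrix.one_mul, trace_sub, trace_mul_cycle Uᵀ]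
  linarith [(hM.conjTranspose_mul_mul_same N).trace_nonneg]

end QuadraticForms

section ProductMoments

variable {ι : Type*} [Fintype ι] {ν : Measure ℝ} [IsProbabilityMeasure ν]

lemma dotProduct_mulVec_eq_sum_sum (M : Matrix ι ι ℝ) (x : ι → ℝ) :
    x ⬝ᵥ M *ᵥ x = ∑ i, ∑ j, M i j * (x i * x j) := by
  simp only [dotProduct, mulVec, Finset.mul_sum]
  exact Finset.sum_congr rfl fun i _ => Finset.sum_congr rfl fun j _ => by ring

lemma memLp_eval_pi {p : ENNReal} (hν : MemLp id p ν) (i : ι) :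
    MemLp (fun x : ι → ℝ => x i) p (Measure.pi fun _ => ν) :=
  hν.comp_measurePreserving (measurePreserving_eval (fun _ => ν) i)

lemma memLp_two_eval_mul_eval (hν : MemLp id 4 ν) (i j : ι) :
    MemLp (fun x : ι → ℝ => x i * x j) 2 (Measure.pi fun _ => ν) := by
  have : ENNReal.HolderTriple 4 4 2 := ⟨by
    rw [← two_mul, show (4 : ENNReal) = 2 * 2 by norm_num, ENNReal.mul_inv (by simp) (by simp),
      ← mul_assoc, ENNReal.mul_inv_cancel (by simp) (by simp), one_mul]⟩
  exact (memLp_eval_pi hν j).mul (memLp_eval_pi hν i)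

lemma memLp_two_dotProduct_mulVec_self (hν : MemLp id 4 ν) (M : Matrix ι ι ℝ) :
    MemLp (fun x => x ⬝ᵥ M *ᵥ x) 2 (Measure.pi fun _ => ν) := by
  simp only [dotProduct_mulVec_eq_sum_sum]
  exact memLp_finsetSum _ fun i _ => memLp_finsetSum _ fun j _ =>
    (memLp_two_eval_mul_eval hν i j).const_mul _

lemma memLp_two_dotProduct_self (hν : MemLp id 4 ν) :
    MemLp (fun x : ι → ℝ => x ⬝ᵥ x) 2 (Measure.pi fun _ => ν) := by
  classical
  simpa only [one_mulVec] using memLp_two_dotProduct_mulVec_self hν (1 : Matrix ι ι ℝ)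

lemma iIndepFun_eval_pi :
    iIndepFun (fun (i : ι) (x : ι → ℝ) => x i) (Measure.pi fun _ => ν) :=
  iIndepFun_pi (X := fun _ t => t) fun _ => aemeasurable_id

lemma integral_eval_pow_pi (i : ι) (k : ℕ) :
    ∫ x : ι → ℝ, x i ^ k ∂(Measure.pi fun _ => ν) = ∫ t, t ^ k ∂ν :=
  integral_comp_eval (μ := fun _ : ι => ν) (f := fun t : ℝ => t ^ k) (by fun_prop)

lemma integral_eval_mul_eval [DecidableEq ι] (hmean : ∫ t, t ∂ν = 0) (i j : ι) :
    ∫ x : ι → ℝ, x i * x j ∂(Measure.pi fun _ => ν) = if i = j then ∫ t, t ^ 2 ∂ν else 0 := by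
  split_ifs with hij
  · simp only [hij, ← sq, integral_eval_pow_pi]
  · rw [(iIndepFun_eval_pi.indepFun hij).integral_fun_mul_eq_mul_integral
      (measurable_pi_apply i).aestronglyMeasurable (measurable_pi_apply j).aestronglyMeasurable,
      integral_eval, hmean, zero_mul]

lemma integral_eval_mul_eval_mul_sq_eq_zero (hmean : ∫ t, t ∂ν = 0) {i j k : ι} (hij : i ≠ j)
    (hik : i ≠ k) : ∫ x : ι → ℝ, x i * x j * x k ^ 2 ∂(Measure.pi fun _ => ν) = 0 := by
  have h_indep : IndepFun (fun x : ι → ℝ => x i) (fun x => x j * x k ^ 2)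
      (Measure.pi fun _ => ν) :=
    ((iIndepFun_eval_pi.indepFun_prodMk measurable_pi_apply j k i hij.symm hik.symm).comp
      (φ := fun p : ℝ × ℝ => p.1 * p.2 ^ 2) (by fun_prop) measurable_id).symm
  simp only [mul_assoc]
  rw [h_indep.integral_fun_mul_eq_mul_integral (measurable_pi_apply i).aestronglyMeasurable
    (Measurable.aestronglyMeasurable (by fun_prop)), integral_eval, hmean, zero_mul]

lemma integral_eval_mul_eval_mul_sq [DecidableEq ι] (hmean : ∫ t, t ∂ν = 0) (i j k : ι) :
    ∫ x : ι → ℝ, x i * x j * x k ^ 2 ∂(Measure.pi fun _ => ν) =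
      if i = j then (if i = k then ∫ t, t ^ 4 ∂ν else (∫ t, t ^ 2 ∂ν) ^ 2) else 0 := by
  split_ifs with hij hik
  · simp only [← hij, ← hik, ← sq, ← pow_mul, integral_eval_pow_pi, Nat.reducePow]
  · have h_indep : IndepFun (fun x : ι → ℝ => x i ^ 2) (fun x => x k ^ 2)
        (Measure.pi fun _ => ν) :=
      (iIndepFun_eval_pi.indepFun hik).comp (φ := fun t : ℝ => t ^ 2) (ψ := fun t : ℝ => t ^ 2)
        (by fun_prop) (by fun_prop)
    simp only [← hij, ← sq]
    rw [h_indep.integral_fun_mul_eq_mul_integral (Measurable.aestronglyMeasurable (by fun_prop))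
      (Measurable.aestronglyMeasurable (by fun_prop)), integral_eval_pow_pi, integral_eval_pow_pi,
      sq]
  · by_cases hik : i = k
    · have hjk : j ≠ k := fun h => hij (hik.trans h.symm)
      simpa only [mul_comm] using
        integral_eval_mul_eval_mul_sq_eq_zero hmean (Ne.symm hij) hjk
    · exact integral_eval_mul_eval_mul_sq_eq_zero hmean hij hik

lemma integral_dotProduct_mulVec_self (hν : MemLp id 2 ν) (hmean : ∫ t, t ∂ν = 0)
    (M : Matrix ι ι ℝ) :
    ∫ x, x ⬝ᵥ M *ᵥ x ∂(Measure.pi fun _ => ν) = (∫ t, t ^ 2 ∂ν) * M.trace := by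
  classical
  have h_int (i j : ι) : Integrable (fun x : ι → ℝ => M i j * (x i * x j))
      (Measure.pi fun _ => ν) :=
    ((memLp_eval_pi hν i).integrable_mul (memLp_eval_pi hν j)).const_mul _
  simp only [dotProduct_mulVec_eq_sum_sum]
  rw [integral_finsetSum _ fun i _ => integrable_finsetSum _ fun j _ => h_int i j, trace,
    Finset.mul_sum]
  refine Finset.sum_congr rfl fun i _ => ?_
  rw [integral_finsetSum _ fun j _ => h_int i j]
  simp [integral_const_mul, integral_eval_mul_eval hmean, mul_comm]

lemma integral_eval_mul_eval_mul_dotProduct_self [DecidableEq ι] (hν : MemLp id 4 ν)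
    (hmean : ∫ t, t ∂ν = 0) (i j : ι) :
    ∫ x : ι → ℝ, x i * x j * (x ⬝ᵥ x) ∂(Measure.pi fun _ => ν) =
      if i = j then ∫ t, t ^ 4 ∂ν + (Fintype.card ι - 1) * (∫ t, t ^ 2 ∂ν) ^ 2 else 0 := by
  have h_int (k : ι) : Integrable (fun x : ι → ℝ => x i * x j * x k ^ 2)
      (Measure.pi fun _ => ν) := by
    simp only [sq]
    exact (memLp_two_eval_mul_eval hν i j).integrable_mul (memLp_two_eval_mul_eval hν k k)
  simp only [dotProduct, ← sq, Finset.mul_sum]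
  rw [integral_finsetSum _ fun k _ => h_int k]
  simp only [integral_eval_mul_eval_mul_sq hmean]
  split_ifs
  · rw [← Finset.add_sum_erase _ _ (Finset.mem_univ i), if_pos rfl]
    congr 1
    rw [Finset.sum_congr rfl fun k hk => if_neg (Finset.ne_of_mem_erase hk).symm]
    simp [Nat.cast_pred (Fintype.card_pos_iff.mpr ⟨i⟩)]
  · simp

lemma integral_dotProduct_mulVec_self_mul_dotProduct_self (hν : MemLp id 4 ν)
    (hmean : ∫ t, t ∂ν = 0) (M : Matrix ι ι ℝ) :
    ∫ x, (x ⬝ᵥ M *ᵥ x) * (x ⬝ᵥ x) ∂(Measure.pi fun _ => ν) =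
      (∫ t, t ^ 4 ∂ν + (Fintype.card ι - 1) * (∫ t, t ^ 2 ∂ν) ^ 2) * M.trace := by
  classical
  have h_int (i j : ι) : Integrable (fun x : ι → ℝ => M i j * (x i * x j * (x ⬝ᵥ x)))
      (Measure.pi fun _ => ν) :=
    ((memLp_two_eval_mul_eval hν i j).integrable_mul (memLp_two_dotProduct_self hν)).const_mul _
  simp only [dotProduct_mulVec_eq_sum_sum, Finset.sum_mul, mul_assoc (M _ _)]
  rw [integral_finsetSum _ fun i _ => integrable_finsetSum _ fun j _ => h_int i j, trace,
    Finset.mul_sum]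
  refine Finset.sum_congr rfl fun i _ => ?_
  rw [integral_finsetSum _ fun j _ => h_int i j]
  simp only [integral_const_mul, integral_eval_mul_eval_mul_dotProduct_self hν hmean]
  simp [mul_comm]

end ProductMoments

section GaussianMoments

open scoped NNReal

variable {ι : Type*} [Fintype ι] (v : ℝ≥0)

lemma iteratedDeriv_succ_id_mul_zero {f : ℝ → ℝ} {k : ℕ} (hf : ContDiffAt ℝ (k + 1 : ℕ) f 0) :
    iteratedDeriv (k + 1) (fun t => t * f t) 0 = (k + 1) * iteratedDeriv k f 0 := by
  rw [iteratedDeriv_fun_mul contDiffAt_fun_id hf, Finset.sum_eq_single_of_mem 1 (by simp)]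
  · simp [iteratedDeriv_fun_id_zero]
  · intro i _ hi
    simp [iteratedDeriv_fun_id_zero, hi]

-- Differentiate the identity `m'(t) = v * t * m(t)` for the moment generating function `m`.
lemma integral_pow_add_two_gaussianReal (k : ℕ) :
    ∫ t, t ^ (k + 2) ∂(gaussianReal 0 v) = (k + 1) * v * ∫ t, t ^ k ∂(gaussianReal 0 v) := by
  have h_moment (l : ℕ) : ∫ t, t ^ l ∂(gaussianReal 0 v) =
      iteratedDeriv l (fun t : ℝ => Real.exp (v * t ^ 2 / 2)) 0 := by
    have h := iteratedDeriv_mgf_zero (X := fun t : ℝ => t) (μ := gaussianReal 0 v) (by simp) l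
    simpa [mgf_fun_id_gaussianReal] using h.symm
  have h_deriv : deriv (fun t : ℝ => Real.exp (v * t ^ 2 / 2)) =
      fun t => v * (t * Real.exp (v * t ^ 2 / 2)) := by
    funext t
    have h := (((hasDerivAt_pow 2 t).const_mul (v : ℝ)).div_const 2).exp.deriv
    simp only [h]
    push_cast
    ring
  rw [h_moment, h_moment, iteratedDeriv_succ', h_deriv, iteratedDeriv_const_mul_field,
    iteratedDeriv_succ_id_mul_zero (by fun_prop)]
  ring

lemma integral_sq_gaussianReal : ∫ t, t ^ 2 ∂(gaussianReal 0 v) = v := by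
  simpa using integral_pow_add_two_gaussianReal v 0

lemma integral_pow_four_gaussianReal : ∫ t, t ^ 4 ∂(gaussianReal 0 v) = 3 * (v : ℝ) ^ 2 := by
  rw [integral_pow_add_two_gaussianReal v 2, integral_sq_gaussianReal]
  push_cast
  ring

lemma integral_dotProduct_mulVec_self_gaussian (M : Matrix ι ι ℝ) :
    ∫ x, x ⬝ᵥ M *ᵥ x ∂(Measure.pi fun _ => gaussianReal 0 v) = v * M.trace := by
  rw [integral_dotProduct_mulVec_self (memLp_id_gaussianReal 2) integral_id_gaussianReal,
    integral_sq_gaussianReal]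

lemma integral_dotProduct_self_gaussian :
    ∫ x : ι → ℝ, x ⬝ᵥ x ∂(Measure.pi fun _ => gaussianReal 0 v) = Fintype.card ι * v := by
  classical
  simpa [mul_comm] using integral_dotProduct_mulVec_self_gaussian v (1 : Matrix ι ι ℝ)

lemma integral_dotProduct_mulVec_self_mul_dotProduct_self_gaussian (M : Matrix ι ι ℝ) :
    ∫ x, (x ⬝ᵥ M *ᵥ x) * (x ⬝ᵥ x) ∂(Measure.pi fun _ => gaussianReal 0 v) =
      (Fintype.card ι + 2) * v ^ 2 * M.trace := by
  rw [integral_dotProduct_mulVec_self_mul_dotProduct_self (memLp_id_gaussianReal 4)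
    integral_id_gaussianReal, integral_sq_gaussianReal, integral_pow_four_gaussianReal]
  ring

end GaussianMoments

section ProductMeasure

variable {α β : Type*} [MeasurableSpace α] [MeasurableSpace β] {P : Measure α} {Q : Measure β}
  [IsProbabilityMeasure P] [IsProbabilityMeasure Q] {f₁ g₁ : α → ℝ} {f₂ g₂ : β → ℝ}

lemma integrable_prod_add_mul_add (hf₁ : MemLp f₁ 2 P) (hg₁ : MemLp g₁ 2 P)
    (hf₂ : MemLp f₂ 2 Q) (hg₂ : MemLp g₂ 2 Q) :
    Integrable (fun p : α × β => (f₁ p.1 + f₂ p.2) * (g₁ p.1 + g₂ p.2)) (P.prod Q) :=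
  ((hf₁.comp_fst Q).add (hf₂.comp_snd P)).integrable_mul ((hg₁.comp_fst Q).add (hg₂.comp_snd P))

lemma integral_prod_add_mul_add (hf₁ : MemLp f₁ 2 P) (hg₁ : MemLp g₁ 2 P)
    (hf₂ : MemLp f₂ 2 Q) (hg₂ : MemLp g₂ 2 Q) :
    ∫ p : α × β, (f₁ p.1 + f₂ p.2) * (g₁ p.1 + g₂ p.2) ∂(P.prod Q) =
      ∫ a, f₁ a * g₁ a ∂P + (∫ a, f₁ a ∂P) * ∫ b, g₂ b ∂Q +
        (∫ a, g₁ a ∂P) * ∫ b, f₂ b ∂Q + ∫ b, f₂ b * g₂ b ∂Q := by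
  have h₁₁ : Integrable (fun p : α × β => f₁ p.1 * g₁ p.1) (P.prod Q) :=
    (hf₁.comp_fst Q).integrable_mul (hg₁.comp_fst Q)
  have h₁₂ : Integrable (fun p : α × β => f₁ p.1 * g₂ p.2) (P.prod Q) :=
    (hf₁.comp_fst Q).integrable_mul (hg₂.comp_snd P)
  have h₂₁ : Integrable (fun p : α × β => g₁ p.1 * f₂ p.2) (P.prod Q) :=
    (hg₁.comp_fst Q).integrable_mul (hf₂.comp_snd P)
  have h₂₂ : Integrable (fun p : α × β => f₂ p.2 * g₂ p.2) (P.prod Q) :=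
    (hf₂.comp_snd P).integrable_mul (hg₂.comp_snd P)
  have h_expand (p : α × β) : (f₁ p.1 + f₂ p.2) * (g₁ p.1 + g₂ p.2) =
      f₁ p.1 * g₁ p.1 + f₁ p.1 * g₂ p.2 + g₁ p.1 * f₂ p.2 + f₂ p.2 * g₂ p.2 := by ring
  simp only [h_expand]
  rw [integral_add (by fun_prop) h₂₂, integral_add (by fun_prop) h₂₁, integral_add h₁₁ h₁₂,
    integral_prod_mul, integral_prod_mul, integral_fun_fst (fun a => f₁ a * g₁ a),
    integral_fun_snd (fun b => f₂ b * g₂ b)]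
  simp

end ProductMeasure

section SignalPlusNoise

open scoped NNReal

variable {ι κ : Type*} [Fintype ι] [Fintype κ]

lemma integrable_decoupled_fourth_order_gaussian (B : Matrix κ κ ℝ) (M : Matrix ι ι ℝ)
    (s v : ℝ≥0) :
    Integrable (fun p : (κ → ℝ) × (ι → ℝ) =>
        (p.1 ⬝ᵥ B *ᵥ p.1 + p.2 ⬝ᵥ M *ᵥ p.2) * (p.1 ⬝ᵥ p.1 + p.2 ⬝ᵥ p.2))
      ((Measure.pi fun _ => gaussianReal 0 s).prod (Measure.pi fun _ => gaussianReal 0 v)) := by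
  have hs : MemLp id 4 (gaussianReal 0 s) := memLp_id_gaussianReal 4
  have hv : MemLp id 4 (gaussianReal 0 v) := memLp_id_gaussianReal 4
  exact integrable_prod_add_mul_add (memLp_two_dotProduct_mulVec_self hs B)
    (memLp_two_dotProduct_self hs) (memLp_two_dotProduct_mulVec_self hv M)
    (memLp_two_dotProduct_self hv)

lemma integral_decoupled_fourth_order_gaussian (B : Matrix κ κ ℝ) (M : Matrix ι ι ℝ)
    (s v : ℝ≥0) :
    ∫ p : (κ → ℝ) × (ι → ℝ),
        (p.1 ⬝ᵥ B *ᵥ p.1 + p.2 ⬝ᵥ M *ᵥ p.2) * (p.1 ⬝ᵥ p.1 + p.2 ⬝ᵥ p.2)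
        ∂((Measure.pi fun _ => gaussianReal 0 s).prod (Measure.pi fun _ => gaussianReal 0 v)) =
      ((Fintype.card κ + 2) * s ^ 2 + Fintype.card ι * s * v) * B.trace +
        (Fintype.card κ * s * v + (Fintype.card ι + 2) * v ^ 2) * M.trace := by
  have hs : MemLp id 4 (gaussianReal 0 s) := memLp_id_gaussianReal 4
  have hv : MemLp id 4 (gaussianReal 0 v) := memLp_id_gaussianReal 4
  rw [integral_prod_add_mul_add (memLp_two_dotProduct_mulVec_self hs B)
    (memLp_two_dotProduct_self hs) (memLp_two_dotProduct_mulVec_self hv M)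
    (memLp_two_dotProduct_self hv)]
  simp only [integral_dotProduct_mulVec_self_gaussian, integral_dotProduct_self_gaussian,
    integral_dotProduct_mulVec_self_mul_dotProduct_self_gaussian]
  ring

lemma signal_add_noise_fourth_order_le [DecidableEq κ] {U : Matrix ι κ ℝ} (hU : Uᵀ * U = 1)
    {M : Matrix ι ι ℝ} (hM : M.PosSemidef) (c : κ → ℝ) (z : ι → ℝ) :
    ((U *ᵥ c + z) ⬝ᵥ M *ᵥ (U *ᵥ c + z)) * ((U *ᵥ c + z) ⬝ᵥ (U *ᵥ c + z)) ≤
      4 * ((c ⬝ᵥ (Uᵀ * M * U) *ᵥ c + z ⬝ᵥ M *ᵥ z) * (c ⬝ᵥ c + z ⬝ᵥ z)) := by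
  have h_form := dotProduct_mulVec_add_self_le hM (U *ᵥ c) z
  have h_norm := dotProduct_add_self_le (U *ᵥ c) z
  rw [mulVec_dotProduct_mulVec_of_transpose_mul_eq_one hU] at h_norm
  rw [← dotProduct_transpose_mul_mul_mulVec] at h_form
  calc _ ≤ 2 * (c ⬝ᵥ (Uᵀ * M * U) *ᵥ c + z ⬝ᵥ M *ᵥ z) * (2 * (c ⬝ᵥ c + z ⬝ᵥ z)) :=
        mul_le_mul h_form h_norm (dotProduct_self_star_nonneg _)
          ((dotProduct_mulVec_self_nonneg hM _).trans h_form)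
    _ = _ := by ring

lemma integral_signal_add_noise_fourth_order_le [DecidableEq κ] {U : Matrix ι κ ℝ} (hU : Uᵀ * U = 1)
    {M : Matrix ι ι ℝ} (hM : M.PosSemidef) (s v : ℝ≥0) :
    ∫ p : (κ → ℝ) × (ι → ℝ),
        ((U *ᵥ p.1 + p.2) ⬝ᵥ M *ᵥ (U *ᵥ p.1 + p.2)) * ((U *ᵥ p.1 + p.2) ⬝ᵥ (U *ᵥ p.1 + p.2))
        ∂((Measure.pi fun _ => gaussianReal 0 s).prod (Measure.pi fun _ => gaussianReal 0 v)) ≤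
      4 * M.trace * ((Fintype.card κ + 2) * s ^ 2 + Fintype.card ι * s * v +
        Fintype.card κ * s * v + (Fintype.card ι + 2) * v ^ 2) := by
  calc _ ≤ ∫ p : (κ → ℝ) × (ι → ℝ), 4 * ((p.1 ⬝ᵥ (Uᵀ * M * U) *ᵥ p.1 + p.2 ⬝ᵥ M *ᵥ p.2) *
            (p.1 ⬝ᵥ p.1 + p.2 ⬝ᵥ p.2))
          ∂((Measure.pi fun _ => gaussianReal 0 s).prod
            (Measure.pi fun _ => gaussianReal 0 v)) :=
        integral_mono_of_nonneg
          (.of_forall fun _ => mul_nonneg (dotProduct_mulVec_self_nonneg hM _)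
            (dotProduct_self_star_nonneg _))
          ((integrable_decoupled_fourth_order_gaussian _ M s v).const_mul 4)
          (.of_forall fun p => signal_add_noise_fourth_order_le hU hM p.1 p.2)
    _ = 4 * (((Fintype.card κ + 2) * s ^ 2 + Fintype.card ι * s * v) * (Uᵀ * M * U).trace +
          (Fintype.card κ * s * v + (Fintype.card ι + 2) * v ^ 2) * M.trace) := by
        rw [integral_const_mul, integral_decoupled_fourth_order_gaussian]
    _ ≤ 4 * (((Fintype.card κ + 2) * s ^ 2 + Fintype.card ι * s * v) * M.trace +
          (Fintype.card κ * s * v + (Fintype.card ι + 2) * v ^ 2) * M.trace) := by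
        gcongr
        exact trace_transpose_mul_mul_le hU hM
    _ = _ := by ring

end SignalPlusNoise

lemma add_two_mul_div_sq_le {a : ℝ} (ha : 2 ≤ a) (b : ℝ) :
    (a + 2) * (b / a) ^ 2 ≤ 2 * b ^ 2 / a := by
  have _ : 0 < a := by linarith
  calc (a + 2) * (b / a) ^ 2 ≤ (a + a) * (b / a) ^ 2 := by gcongr
    _ = 2 * b ^ 2 / a := by field_simp; ring

lemma model_variance_coefficient_le {d n : ℝ} (hd : 2 ≤ d) (hn : 2 ≤ n) (σ : ℝ) :
    (d + 2) * (1 / d) ^ 2 + n * (1 / d) * (σ ^ 2 / n) + d * (1 / d) * (σ ^ 2 / n) +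
        (n + 2) * (σ ^ 2 / n) ^ 2 ≤
      2 / d + σ ^ 2 / d + σ ^ 2 / n + 2 * σ ^ 4 / n := by
  have _ : 0 < d := by linarith
  have _ : 0 < n := by linarith
  have h_signal : (d + 2) * (1 / d) ^ 2 ≤ 2 / d := by
    simpa using add_two_mul_div_sq_le hd 1
  have h_noise : (n + 2) * (σ ^ 2 / n) ^ 2 ≤ 2 * σ ^ 4 / n :=
    (add_two_mul_div_sq_le hn (σ ^ 2)).trans_eq (by ring)
  have h_signal_noise : n * (1 / d) * (σ ^ 2 / n) = σ ^ 2 / d := by field_simp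
  have h_noise_signal : d * (1 / d) * (σ ^ 2 / n) = σ ^ 2 / n := by field_simp
  linarith

/-- In the linear subspace denoising model with `2 ≤ d ≤ n`,
for every `W ∈ ℝ^{n×n}`,
`E‖(W - W*)(x xᵀ + x zᵀ + z xᵀ + z zᵀ)‖_F² ≤ 4 ‖W - W*‖_F² (2/d + σ_z²/d + σ_z²/n + 2σ_z⁴/n)`,
where `x = U c`. -/
theorem stmt17 (n d : ℕ) (hd : 2 ≤ d) (hdn : d ≤ n)
    {Ω : Type*} [MeasurableSpace Ω] (μ : Measure Ω) [IsProbabilityMeasure μ]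
    (σz σe : ℝ) (hσz : 0 ≤ σz) (hσe : 0 ≤ σe)
    (U : Matrix (Fin n) (Fin d) ℝ) (hU : Uᵀ * U = 1)
    (c : Ω → Fin d → ℝ) (z : Ω → Fin n → ℝ)
    (hc : Measurable c) (hz : Measurable z)
    (hlaw : Measure.map (fun ω => (c ω, z ω)) μ =
      (Measure.pi fun _ : Fin d => gaussianReal 0 ((1 / (d : ℝ)).toNNReal)).prod
        (Measure.pi fun _ : Fin n => gaussianReal 0 ((σz ^ 2 / (n : ℝ)).toNNReal)))
    (Wstar : Matrix (Fin n) (Fin n) ℝ)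
    (hWstar : Wstar = (1 / (1 + σz ^ 2 * d / n)) • (U * Uᵀ))
    (W : Matrix (Fin n) (Fin n) ℝ) :
    ∫ ω, ∑ i, ∑ j,
        (((W - Wstar) *
          (vecMulVec (U.mulVec (c ω)) (U.mulVec (c ω)) +
            vecMulVec (U.mulVec (c ω)) (z ω) +
            vecMulVec (z ω) (U.mulVec (c ω)) +
            vecMulVec (z ω) (z ω))) i j) ^ 2 ∂μ ≤
      4 * (∑ i, ∑ j, ((W - Wstar) i j) ^ 2) *
        (2 / (d : ℝ) + σz ^ 2 / (d : ℝ) + σz ^ 2 / (n : ℝ) + 2 * σz ^ 4 / (n : ℝ)) := by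
  have hd' : (2 : ℝ) ≤ d := by exact_mod_cast hd
  have hn' : (2 : ℝ) ≤ n := by exact_mod_cast hd.trans hdn
  have hM : ((W - Wstar)ᵀ * (W - Wstar)).PosSemidef := posSemidef_conjTranspose_mul_self _
  have h_bound := integral_signal_add_noise_fourth_order_le hU hM (1 / (d : ℝ)).toNNReal
    (σz ^ 2 / (n : ℝ)).toNNReal
  rw [← hlaw, integral_map (hc.prodMk hz).aemeasurable
    (Continuous.aestronglyMeasurable (by fun_prop)), Fintype.card_fin, Fintype.card_fin,
    Real.coe_toNNReal _ (by positivity), Real.coe_toNNReal _ (by positivity)] at h_bound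
  simp only [sum_vecMulVec_eq_vecMulVec_add, sum_sum_mul_vecMulVec_sq, sum_sum_sq_eq_trace]
  exact h_bound.trans (mul_le_mul_of_nonneg_left (model_variance_coefficient_le hd' hn' σz)
    (mul_nonneg zero_le_four hM.trace_nonneg))
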